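/- Let γ be an integer with 1 ≤ γ < K. Suppose the protocol sequence set s_1, …, s_K is TI with MPR capability γ, R_i > 0 for every user i, and the duty factor of each s_i equals n_i/d_i where n_i, d_i are positive integers with gcd(n_i, d_i) = 1. Then the common period L is divisible by the product d_1 · d_2 ⋯ d_K. -/

import Mathlib

open Finset

/-- Generalized Hamming cross-correlation of the sequences indexed by `A`
(only the shifts `τ j` with `j ∈ A` matter). -/
def Hcorr {K L : ℕ} [NeZero L] (s : Fin K → ZMod L → ℕ)
    (A : Finset (Fin K)) (τ : Fin K → ZMod L) : ℕ :=
  ∑ t : ZMod L, ∏ j ∈ A, s j (t + τ j)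

/-- The family `s` is shift-invariant (SI): every generalized Hamming
cross-correlation is independent of the relative shifts. -/
def IsSI {K L : ℕ} [NeZero L] (s : Fin K → ZMod L → ℕ) : Prop :=
  ∀ A : Finset (Fin K), A.Nonempty →
    ∀ τ τ' : Fin K → ZMod L, Hcorr s A τ = Hcorr s A τ'

/-- Number of slots `t` in one period where user `i` transmits and at most
`γ - 1` other users transmit. -/
def Rcount {K L : ℕ} [NeZero L] (s : Fin K → ZMod L → ℕ) (γ : ℕ)
    (i : Fin K) (τ : Fin K → ZMod L) : ℕ :=
  (Finset.univ.filter (fun t : ZMod L =>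
    s i (t + τ i) = 1 ∧ ∑ j ∈ Finset.univ.erase i, s j (t + τ j) ≤ γ - 1)).card

/-- Throughput of user `i` under MPR capability `γ` at shifts `τ`. -/
def R {K L : ℕ} [NeZero L] (s : Fin K → ZMod L → ℕ) (γ : ℕ)
    (i : Fin K) (τ : Fin K → ZMod L) : ℚ :=
  (Rcount s γ i τ : ℚ) / L

/-- The family `s` is throughput-invariant (TI) with MPR capability `γ`. -/
def IsTI {K L : ℕ} [NeZero L] (s : Fin K → ZMod L → ℕ) (γ : ℕ) : Prop :=
  ∀ i : Fin K, ∀ τ τ' : Fin K → ZMod L, R s γ i τ = R s γ i τ'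

/-- Duty factor of a single sequence. -/
def duty {L : ℕ} [NeZero L] (s : ZMod L → ℕ) : ℚ :=
  (∑ t : ZMod L, (s t : ℚ)) / L

/-!
Write each sequence as its duty factor plus a centred part, `s j = f j + g j` with `∑ t, g j t = 0`.
A slot in which user `i` is heard is detected by the coefficients of degree at most `γ - 1` of
`s i * ∏ j ≠ i, (1 + s j * (X - 1))`, since for a bit `b` the factor `1 + b * (X - 1)` is `X ^ b`.
Multiplying out expresses the throughput of user `i` as a combination, with constant coefficients
`c i B`, of the correlations of the families `(g j)_{j ∈ B}`. As functions of the shifts these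
correlations are pairwise orthogonal, so throughput invariance kills every correlation with
`B ≠ ∅` for which some `c i B` is nonzero.

Such an `i` always exists. If `B` consists of all users, `c i B` is a binomial coefficient up to
sign. Otherwise suppose `c i B = c j B = 0` with `i ∉ B` and `j ∈ B`. If `B = {j}`, then `c i ∅` is
a combination of the two. If `B` is larger, a real-rooted polynomial has two consecutive vanishing
coefficients, hence (Laguerre's inequality for its derivatives) all its lower coefficients vanish
too, and again `c i ∅ = 0`. This contradicts positivity of the throughput, as `c i ∅` is
proportional to its average over all shifts.
So all centred correlations vanish, the number of slots in which all users of `A` transmit is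
`L * ∏ j ∈ A, f j`, and this being an integer for every `A` gives the divisibility, prime by prime.
-/

open Polynomial

section Laguerre

/-- The Laguerre expression `p' ^ 2 - p * p''`, which is `p ^ 2` times the derivative of
`-p' / p` and therefore nonnegative on the line when all roots of `p` are real. -/
noncomputable def laguerreForm {α : Type*} [CommRing α] (p : α[X]) : α[X] :=
  derivative p ^ 2 - p * derivative (derivative p)

lemma laguerreForm_mul {α : Type*} [CommRing α] (p q : α[X]) :
    laguerreForm (p * q) = laguerreForm p * q ^ 2 + laguerreForm q * p ^ 2 := by
  simp only [laguerreForm, derivative_mul, derivative_add]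
  ring

lemma laguerreForm_C {α : Type*} [CommRing α] (a : α) : laguerreForm (C a) = 0 := by
  simp [laguerreForm]

lemma laguerreForm_X_add_C {α : Type*} [CommRing α] (a : α) : laguerreForm (X + C a) = 1 := by
  simp [laguerreForm]

variable {α : Type*} [CommRing α] [LinearOrder α] [IsStrictOrderedRing α] {p : α[X]}

lemma eval_laguerreForm_nonneg (hp : p.Splits) (x : α) : 0 ≤ (laguerreForm p).eval x := by
  unfold Splits at hp
  induction hp using Submonoid.closure_induction with
  | mem p hp =>
    rcases hp with ⟨a, rfl⟩ | ⟨a, rfl⟩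
    · simp [laguerreForm_C]
    · simp [laguerreForm_X_add_C]
  | one => rw [← C_1, laguerreForm_C, eval_zero]
  | mul p q _ _ ihp ihq =>
    simp only [laguerreForm_mul, eval_add, eval_mul, eval_pow]
    exact add_nonneg (mul_nonneg ihp (sq_nonneg _)) (mul_nonneg ihq (sq_nonneg _))

lemma eval_laguerreForm_pos (hp : p.Splits) (hdeg : p.natDegree ≠ 0) {x : α}
    (hx : p.eval x ≠ 0) : 0 < (laguerreForm p).eval x := by
  unfold Splits at hp
  induction hp using Submonoid.closure_induction with
  | mem p hp =>
    rcases hp with ⟨a, rfl⟩ | ⟨a, rfl⟩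
    · simp at hdeg
    · simp [laguerreForm_X_add_C]
  | one => simp at hdeg
  | mul p q hp hq ihp ihq =>
    have hp_nonneg := eval_laguerreForm_nonneg hp x
    have hq_nonneg := eval_laguerreForm_nonneg hq x
    simp only [laguerreForm_mul, eval_add, eval_mul, eval_pow] at hx ⊢
    have hpx := left_ne_zero_of_mul hx
    have hqx := right_ne_zero_of_mul hx
    rcases eq_or_ne p.natDegree 0 with hpdeg | hpdeg
    · have hqdeg : q.natDegree ≠ 0 := fun h ↦ by
        have := natDegree_mul_le (p := p) (q := q)
        omega
      exact add_pos_of_nonneg_of_pos (mul_nonneg hp_nonneg (sq_nonneg _))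
        (mul_pos (ihq hqdeg hqx) (sq_pos_iff.2 hpx))
    · exact add_pos_of_pos_of_nonneg (mul_pos (ihp hpdeg hpx) (sq_pos_iff.2 hqx))
        (mul_nonneg hq_nonneg (sq_nonneg _))

end Laguerre

section RealRooted

variable {p : ℝ[X]}

lemma splits_derivative (hp : p.Splits) : (derivative p).Splits := by
  rw [splits_iff_card_roots] at hp ⊢
  have h_rolle := card_roots_le_derivative p
  have h_card := card_roots' (derivative p)
  have h_deg := natDegree_derivative_le p
  omega

lemma splits_iterate_derivative (hp : p.Splits) (k : ℕ) : (derivative^[k] p).Splits := by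
  induction k with
  | zero => exact hp
  | succ k ih =>
    rw [Function.iterate_succ_apply']
    exact splits_derivative ih

lemma coeff_eq_zero_of_coeff_succ_eq_zero (hp : p.Splits) {k : ℕ} (hk : k < p.natDegree)
    (h1 : p.coeff (k + 1) = 0) (h2 : p.coeff (k + 2) = 0) : p.coeff k = 0 := by
  by_contra h0
  have hdeg : (derivative^[k] p).natDegree ≠ 0 := by
    have hlead : (derivative^[k] p).coeff (p.natDegree - k) ≠ 0 := by
      have hp0 : p ≠ 0 := ne_zero_of_natDegree_gt hk
      simp [coeff_iterate_derivative, Nat.sub_add_cancel hk.le, Nat.descFactorial_eq_zero_iff_lt,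
        hk.le, hp0]
    have := le_natDegree_of_ne_zero hlead
    omega
  have hroot : (derivative^[k] p).eval 0 ≠ 0 := by
    simp [← coeff_zero_eq_eval_zero, coeff_iterate_derivative, Nat.descFactorial_self,
      Nat.factorial_ne_zero, h0]
  have hpos := eval_laguerreForm_pos (splits_iterate_derivative hp k) hdeg hroot
  simp [laguerreForm, ← coeff_zero_eq_eval_zero, coeff_derivative, coeff_iterate_derivative,
    add_comm _ k, h1, h2] at hpos

lemma X_pow_dvd_of_two_coeff_eq_zero (hp : p.Splits) {k : ℕ} (hk : k ≤ p.natDegree)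
    (h0 : p.coeff k = 0) (h1 : p.coeff (k + 1) = 0) : X ^ (k + 2) ∣ p := by
  induction k with
  | zero =>
    rw [X_pow_dvd_iff]
    intro l hl
    interval_cases l <;> assumption
  | succ k ih =>
    have hlow := ih (by omega) (coeff_eq_zero_of_coeff_succ_eq_zero hp hk h0 h1) h0
    rw [X_pow_dvd_iff] at hlow ⊢
    intro l hl
    rcases Nat.lt_succ_iff_lt_or_eq.1 hl with hl | rfl
    · exact hlow l hl
    · exact h1

end RealRooted

section PartialCoeffSum

variable {α : Type*} [CommRing α]

/-- The sum of the coefficients of degree at most `n`. If `p` is the generating polynomial of a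
random variable `N`, this is the probability that `N ≤ n`. -/
noncomputable def partialCoeffSum (n : ℕ) : α[X] →ₗ[α] α :=
  ∑ k ∈ Finset.range (n + 1), lcoeff α k

lemma partialCoeffSum_apply (n : ℕ) (p : α[X]) :
    partialCoeffSum n p = ∑ k ∈ Finset.range (n + 1), p.coeff k := by
  simp [partialCoeffSum]

lemma partialCoeffSum_C_mul (n : ℕ) (a : α) (p : α[X]) :
    partialCoeffSum n (C a * p) = a * partialCoeffSum n p := by
  rw [← smul_eq_C_mul, map_smul, smul_eq_mul]

lemma partialCoeffSum_X_sub_one_mul (n : ℕ) (p : α[X]) :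
    partialCoeffSum n ((X - 1) * p) = -p.coeff n := by
  rw [partialCoeffSum_apply]
  induction n with
  | zero => simp [sub_mul]
  | succ n ih =>
    rw [Finset.sum_range_succ, ih, sub_mul, one_mul, coeff_sub, coeff_X_mul]
    ring

lemma partialCoeffSum_X_pow (n k : ℕ) :
    partialCoeffSum n (X ^ k : α[X]) = if k ≤ n then 1 else 0 := by
  simp [partialCoeffSum_apply, coeff_X_pow]

lemma partialCoeffSum_eq_zero_of_X_pow_dvd {n : ℕ} {p : α[X]} (h : X ^ (n + 1) ∣ p) :
    partialCoeffSum n p = 0 := by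
  rw [partialCoeffSum_apply]
  exact Finset.sum_eq_zero fun k hk ↦ X_pow_dvd_iff.1 h k (Finset.mem_range.1 hk)

lemma partialCoeffSum_X_sub_one_pow_ne_zero [IsDomain α] [CharZero α] {n m : ℕ} (h : n ≤ m) :
    partialCoeffSum n ((X - 1) ^ (m + 1) : α[X]) ≠ 0 := by
  have hchoose : (m.choose n : α) ≠ 0 := by exact_mod_cast (Nat.choose_pos h).ne'
  have hsub : (X - 1 : α[X]) = X + C (-1) := by simp [sub_eq_add_neg]
  rw [pow_succ', partialCoeffSum_X_sub_one_mul, hsub, coeff_X_add_C_pow]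
  simp [hchoose]

end PartialCoeffSum

section ConsecutiveDifferences

variable {p : ℝ[X]} {n : ℕ}

lemma X_pow_dvd_of_partialCoeffSum_eq_zero (hp : p.Splits) {r : ℕ}
    (hn : n ≤ r + 1 + p.natDegree)
    (h1 : partialCoeffSum n ((X - 1) ^ (r + 1) * p) = 0)
    (h2 : partialCoeffSum n ((X - 1) ^ (r + 2) * p) = 0) : X ^ (n + 1) ∣ p := by
  rcases eq_or_ne p 0 with rfl | hp0
  · exact dvd_zero _
  set q : ℝ[X] := (X - 1) ^ r * p with hq
  have hX : (X - 1 : ℝ[X]) = X - C 1 := by simp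
  have hq_splits : q.Splits := by
    rw [hq, hX]
    exact ((Splits.X_sub_C 1).pow r).mul hp
  have hq_deg : q.natDegree = r + p.natDegree := by
    rw [hq, hX, natDegree_mul (pow_ne_zero _ (X_sub_C_ne_zero 1)) hp0, natDegree_pow,
      natDegree_X_sub_C, mul_one]
  have hq1 : q.coeff n = 0 := by
    rwa [pow_succ', mul_assoc, partialCoeffSum_X_sub_one_mul, neg_eq_zero] at h1
  have hq2 : ((X - 1) * q).coeff n = 0 := by
    rwa [pow_succ', pow_succ', mul_assoc, partialCoeffSum_X_sub_one_mul, neg_eq_zero,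
      mul_assoc] at h2
  have hdvd : X ^ (n + 1) ∣ q := by
    cases n with
    | zero => simpa [X_dvd_iff] using hq1
    | succ k =>
      rw [sub_mul, one_mul, coeff_sub, coeff_X_mul, hq1, sub_zero] at hq2
      exact X_pow_dvd_of_two_coeff_eq_zero hq_splits (by omega) hq2 hq1
  have hcop : IsCoprime (X ^ (n + 1) : ℝ[X]) ((X - 1) ^ r) :=
    IsCoprime.pow ⟨1, -1, by ring⟩
  exact hcop.dvd_of_dvd_mul_left hdvd

lemma partialCoeffSum_mul_eq_zero (hp : p.Splits) {m : ℕ} (hn : n ≤ m + p.natDegree)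
    (h1 : partialCoeffSum n ((X - 1) ^ m * p) = 0)
    (h2 : partialCoeffSum n ((X - 1) ^ (m + 1) * p) = 0)
    {z : ℝ[X]} (hz : z.natDegree ≤ m + 1) : partialCoeffSum n (z * p) = 0 := by
  cases m with
  | zero =>
    obtain ⟨a, b, rfl⟩ := exists_eq_X_add_C_of_natDegree_le_one hz
    have hsplit : (C a * X + C b) * p =
        C a * ((X - 1) ^ (0 + 1) * p) + C (a + b) * ((X - 1) ^ 0 * p) := by
      rw [C_add]
      ring
    rw [hsplit, map_add, partialCoeffSum_C_mul, partialCoeffSum_C_mul, h1, h2]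
    simp
  | succ r =>
    exact partialCoeffSum_eq_zero_of_X_pow_dvd
      ((X_pow_dvd_of_partialCoeffSum_eq_zero hp hn h1 h2).mul_left z)

end ConsecutiveDifferences

section BernoulliGen

/-- The generating polynomial `(1 - a) + a X` of a Bernoulli variable of mean `a`, written in
powers of `X - 1` so that it is affine in `a`. -/
noncomputable def bernoulliGen {α : Type*} [CommRing α] (a : α) : α[X] :=
  1 + C a * (X - 1)

lemma bernoulliGen_add {α : Type*} [CommRing α] (a b : α) :
    bernoulliGen (a + b) = C a * (X - 1) + bernoulliGen b := by
  rw [bernoulliGen, bernoulliGen, C_add]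
  ring

lemma bernoulliGen_natCast {α : Type*} [CommRing α] {b : ℕ} (hb : b = 0 ∨ b = 1) :
    bernoulliGen (b : α) = X ^ b := by
  rcases hb with rfl | rfl <;> simp [bernoulliGen]

lemma partialCoeffSum_prod_bernoulliGen_natCast {ι α : Type*} [CommRing α] {S : Finset ι}
    {b : ι → ℕ} (hb : ∀ j ∈ S, b j = 0 ∨ b j = 1) (n : ℕ) :
    partialCoeffSum n (∏ j ∈ S, bernoulliGen (b j : α)) = if ∑ j ∈ S, b j ≤ n then 1 else 0 := by
  rw [Finset.prod_congr rfl fun j hj ↦ bernoulliGen_natCast (hb j hj),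
    Finset.prod_pow_eq_pow_sum, partialCoeffSum_X_pow]

lemma bernoulliGen_eq_linear {α : Type*} [CommRing α] (a : α) :
    bernoulliGen a = C a * X + C (1 - a) := by
  rw [bernoulliGen, C_sub, C_1]
  ring

lemma splits_prod_bernoulliGen {ι F : Type*} [Field F] (S : Finset ι) (f : ι → F) :
    (∏ j ∈ S, bernoulliGen (f j)).Splits := by
  refine Splits.prod fun j _ ↦ Splits.of_natDegree_le_one ?_
  rw [bernoulliGen_eq_linear]
  exact natDegree_linear_le

lemma natDegree_prod_bernoulliGen {ι α : Type*} [CommRing α] [IsDomain α] {S : Finset ι}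
    {f : ι → α} (hf : ∀ j ∈ S, f j ≠ 0) : (∏ j ∈ S, bernoulliGen (f j)).natDegree = S.card := by
  have hdeg : ∀ j ∈ S, (bernoulliGen (f j)).natDegree = 1 := fun j hj ↦ by
    rw [bernoulliGen_eq_linear, natDegree_linear (hf j hj)]
  rw [natDegree_prod _ _ fun j hj ↦ ne_zero_of_natDegree_gt (n := 0) (by simp [hdeg j hj]),
    Finset.sum_congr rfl hdeg, Finset.card_eq_sum_ones]

end BernoulliGen

section ThroughputCoeff

variable {ι : Type*} [Fintype ι] [DecidableEq ι]

/-- The coefficient of `∏ j ∈ B, g j` in the throughput of user `i`, when at most `n` other users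
may transmit and user `j` transmits with probability `f j + g j`. -/
noncomputable def throughputCoeff {α : Type*} [CommRing α] (f : ι → α) (n : ℕ) (i : ι)
    (B : Finset ι) : α :=
  (if i ∈ B then 1 else f i) *
    partialCoeffSum n ((X - 1) ^ (B.erase i).card * ∏ j ∈ Bᶜ.erase i, bernoulliGen (f j))

lemma throughputCoeff_of_mem {α : Type*} [CommRing α] (f : ι → α) (n : ℕ) {i : ι}
    {B : Finset ι} (hi : i ∈ B) :
    throughputCoeff f n i B =
      partialCoeffSum n ((X - 1) ^ (B.card - 1) * ∏ j ∈ Bᶜ, bernoulliGen (f j)) := by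
  rw [throughputCoeff, if_pos hi, one_mul, Finset.card_erase_of_mem hi,
    Finset.erase_eq_of_notMem (by simpa using hi)]

lemma throughputCoeff_of_notMem {α : Type*} [CommRing α] (f : ι → α) (n : ℕ) {i : ι}
    {B : Finset ι} (hi : i ∉ B) :
    throughputCoeff f n i B =
      f i * partialCoeffSum n ((X - 1) ^ B.card * ∏ j ∈ Bᶜ.erase i, bernoulliGen (f j)) := by
  rw [throughputCoeff, if_neg hi, Finset.erase_eq_of_notMem hi]

lemma sum_throughputCoeff_mul_prod {α : Type*} [CommRing α] (f g : ι → α) (n : ℕ) (i : ι) :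
    ∑ B, throughputCoeff f n i B * ∏ j ∈ B, g j =
      (g i + f i) * partialCoeffSum n (∏ j ∈ Finset.univ.erase i, bernoulliGen (g j + f j)) := by
  set v : ι → α[X] := fun j ↦ if j = i then 1 else X - 1 with hv
  set u : ι → α[X] := fun j ↦ if j = i then C (f i) else bernoulliGen (f j) with hu
  have hprod : C (g i + f i) * ∏ j ∈ Finset.univ.erase i, bernoulliGen (g j + f j) =
      ∏ j, (C (g j) * v j + u j) := by
    rw [← Finset.mul_prod_erase _ _ (Finset.mem_univ i)]
    congr 1
    · simp [hu, hv]
    · refine Finset.prod_congr rfl fun j hj ↦ ?_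
      simp [hu, hv, Finset.ne_of_mem_erase hj, bernoulliGen_add]
  have hvB (B : Finset ι) : ∏ j ∈ B, v j = (X - 1) ^ (B.erase i).card := by
    simp [hv, Finset.prod_ite, Finset.filter_ne']
  have huB (B : Finset ι) : ∏ j ∈ Bᶜ, u j =
      C (if i ∈ B then 1 else f i) * ∏ j ∈ Bᶜ.erase i, bernoulliGen (f j) := by
    by_cases hi : i ∈ B <;> simp [hu, Finset.prod_ite, Finset.filter_ne', Finset.filter_eq', hi]
  rw [← partialCoeffSum_C_mul, hprod, Finset.prod_add, map_sum, Finset.powerset_univ]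
  refine Finset.sum_congr rfl fun B _ ↦ ?_
  rw [Finset.prod_mul_distrib, ← map_prod, mul_assoc, partialCoeffSum_C_mul, hvB,
    ← Finset.compl_eq_univ_sdiff, huB, mul_left_comm, partialCoeffSum_C_mul, throughputCoeff,
    mul_comm]

lemma throughputCoeff_univ_ne_zero {α : Type*} [CommRing α] [IsDomain α] [CharZero α]
    (f : ι → α) {n : ℕ} (hn : n + 2 ≤ Fintype.card ι) (i : ι) :
    throughputCoeff f n i Finset.univ ≠ 0 := by
  obtain ⟨m, hm⟩ : ∃ m, Fintype.card ι - 1 = m + 1 := ⟨Fintype.card ι - 2, by omega⟩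
  rw [throughputCoeff_of_mem f n (Finset.mem_univ i), Finset.card_univ, hm]
  simpa using partialCoeffSum_X_sub_one_pow_ne_zero (α := α) (show n ≤ m by omega)

lemma throughputCoeff_empty_eq_zero {f : ι → ℝ} (hf : ∀ j, f j ≠ 0) {n : ℕ}
    (hn : n + 2 ≤ Fintype.card ι) {B : Finset ι} {i j : ι} (hi : i ∉ B) (hj : j ∈ B)
    (hciB : throughputCoeff f n i B = 0) (hcjB : throughputCoeff f n j B = 0) :
    throughputCoeff f n i ∅ = 0 := by
  set p : ℝ[X] := ∏ k ∈ Bᶜ.erase i, bernoulliGen (f k) with hp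
  have hiB : i ∈ Bᶜ := Finset.mem_compl.2 hi
  obtain ⟨m, hm⟩ := Nat.exists_eq_add_one_of_ne_zero (Finset.card_ne_zero_of_mem hj)
  have hp_deg : p.natDegree = Fintype.card ι - B.card - 1 := by
    rw [hp, natDegree_prod_bernoulliGen fun k _ ↦ hf k, Finset.card_erase_of_mem hiB,
      Finset.card_compl]
  have h2 : partialCoeffSum n ((X - 1) ^ (m + 1) * p) = 0 := by
    rw [throughputCoeff_of_notMem f n hi, hm] at hciB
    exact (mul_eq_zero.1 hciB).resolve_left (hf i)
  have h1 : partialCoeffSum n ((X - 1) ^ m * p) = 0 := by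
    have hexpand : (X - 1) ^ m * (bernoulliGen (f i) * p) =
        (X - 1) ^ m * p + C (f i) * ((X - 1) ^ (m + 1) * p) := by
      rw [bernoulliGen]
      ring
    rwa [throughputCoeff_of_mem f n hj, hm, Nat.add_sub_cancel, ← Finset.mul_prod_erase _ _ hiB,
      hexpand, map_add, partialCoeffSum_C_mul, h2, mul_zero, add_zero] at hcjB
  have hz_deg : (∏ k ∈ B, bernoulliGen (f k)).natDegree ≤ m + 1 := by
    rw [natDegree_prod_bernoulliGen fun k _ ↦ hf k, hm]
  have hfull : ∏ k ∈ (∅ : Finset ι)ᶜ.erase i, bernoulliGen (f k) =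
      (∏ k ∈ B, bernoulliGen (f k)) * p := by
    have hdisj : Disjoint B (Bᶜ.erase i) :=
      Finset.disjoint_of_subset_right (Finset.erase_subset _ _) disjoint_compl_right
    rw [hp, ← Finset.prod_union hdisj]
    congr 1
    ext k
    by_cases hk : k ∈ B <;> simp [hk, ne_of_mem_of_not_mem _ hi]
  rw [throughputCoeff_of_notMem f n (Finset.notMem_empty i), hfull, Finset.card_empty, pow_zero,
    one_mul, partialCoeffSum_mul_eq_zero (splits_prod_bernoulliGen _ _)
      (by rw [← hp, hp_deg]; omega) h1 h2 hz_deg, mul_zero]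

lemma exists_throughputCoeff_ne_zero {f : ι → ℝ} {n : ℕ} (hn : n + 2 ≤ Fintype.card ι)
    (h0 : ∀ i, throughputCoeff f n i ∅ ≠ 0) {B : Finset ι} (hB : B.Nonempty) :
    ∃ i, throughputCoeff f n i B ≠ 0 := by
  obtain ⟨j, hj⟩ := hB
  have hf (k : ι) : f k ≠ 0 := by
    have hk := h0 k
    rw [throughputCoeff_of_notMem f n (Finset.notMem_empty k)] at hk
    exact left_ne_zero_of_mul hk
  by_cases hBu : B = Finset.univ
  · exact ⟨j, hBu ▸ throughputCoeff_univ_ne_zero f hn j⟩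
  obtain ⟨i, hi⟩ : ∃ i, i ∉ B := by simpa [Finset.eq_univ_iff_forall] using hBu
  by_contra! hall
  exact h0 i (throughputCoeff_empty_eq_zero hf hn hi hj (hall i) (hall j))

end ThroughputCoeff

section Corr

variable {ι G α : Type*} [AddGroup G] [Fintype G]

/-- The correlation over one period of the functions `g j`, `j ∈ B`, shifted by `τ`; unlike
`Hcorr` it allows values in any commutative semiring, in particular centred sequences. -/
def corr [CommSemiring α] (g : ι → G → α) (B : Finset ι) (τ : ι → G) : α :=
  ∑ t, ∏ j ∈ B, g j (t + τ j)

lemma corr_empty [CommSemiring α] (g : ι → G → α) (τ : ι → G) :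
    corr g ∅ τ = Fintype.card G := by
  simp [corr]

lemma corr_add_const [CommSemiring α] {g : ι → G → α} {A : Finset ι} {τ : ι → G}
    (h : ∀ B ⊆ A, B.Nonempty → corr g B τ = 0) (f : ι → α) :
    corr (fun j t ↦ g j t + f j) A τ = Fintype.card G * ∏ j ∈ A, f j := by
  classical
  calc corr (fun j t ↦ g j t + f j) A τ
      = ∑ B ∈ A.powerset, corr g B τ * ∏ j ∈ A \ B, f j := by
        simp only [corr, Finset.prod_add, Finset.sum_mul]
        exact Finset.sum_comm
    _ = corr g ∅ τ * ∏ j ∈ A \ ∅, f j := by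
        refine Finset.sum_eq_single_of_mem ∅ (Finset.empty_mem_powerset A) fun B hB hB0 ↦ ?_
        rw [h B (Finset.mem_powerset.1 hB) (Finset.nonempty_iff_ne_empty.2 hB0), zero_mul]
    _ = Fintype.card G * ∏ j ∈ A, f j := by rw [corr_empty, Finset.sdiff_empty]

variable [Fintype ι] {g : ι → G → α}

lemma sum_corr_mul_corr_of_ne [DecidableEq ι] [CommSemiring α] (hg : ∀ j, ∑ t, g j t = 0)
    {A B : Finset ι} (hAB : A ≠ B) : ∑ τ, corr g A τ * corr g B τ = 0 := by
  obtain ⟨j, hj⟩ : ∃ j, ¬(j ∈ A ↔ j ∈ B) := by simpa [Finset.ext_iff] using hAB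
  have hshift (t : G) : ∑ x, g j (t + x) = 0 :=
    (Equiv.sum_comp (Equiv.addLeft t) (g j)).trans (hg j)
  set φ : G → G → ι → G → α := fun t u k x ↦
    (if k ∈ A then g k (t + x) else 1) * (if k ∈ B then g k (u + x) else 1) with hφ
  have hfactor (t u : G) (τ : ι → G) :
      (∏ k ∈ A, g k (t + τ k)) * ∏ k ∈ B, g k (u + τ k) = ∏ k, φ t u k (τ k) := by
    simp only [hφ, Finset.prod_mul_distrib, Finset.prod_ite_mem, Finset.univ_inter]
  have hvanish (t u : G) : ∑ τ : ι → G, ∏ k, φ t u k (τ k) = 0 := by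
    rw [← Fintype.prod_sum]
    refine Finset.prod_eq_zero (Finset.mem_univ j) ?_
    by_cases hA : j ∈ A <;> by_cases hB : j ∈ B <;> simp_all
  simp only [corr, Finset.sum_mul_sum, hfactor]
  rw [Finset.sum_comm]
  refine Finset.sum_eq_zero fun t _ ↦ ?_
  rw [Finset.sum_comm]
  exact Finset.sum_eq_zero fun u _ ↦ hvanish t u

lemma sum_expansion_mul_corr [DecidableEq ι] [CommSemiring α] (hg : ∀ j, ∑ t, g j t = 0)
    (c : Finset ι → α) (B : Finset ι) :
    ∑ τ, (∑ A, c A * corr g A τ) * corr g B τ = c B * ∑ τ, corr g B τ * corr g B τ := by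
  simp only [Finset.sum_mul, mul_assoc]
  rw [Finset.sum_comm]
  simp only [← Finset.mul_sum]
  refine Finset.sum_eq_single_of_mem B (Finset.mem_univ B) fun A _ hA ↦ ?_
  rw [sum_corr_mul_corr_of_ne hg hA, mul_zero]

variable [CommRing α] [LinearOrder α] [IsStrictOrderedRing α]

lemma sum_corr_eq_zero [DecidableEq ι] (hg : ∀ j, ∑ t, g j t = 0) {B : Finset ι} (hB : B.Nonempty) :
    ∑ τ, corr g B τ = 0 := by
  have h := sum_corr_mul_corr_of_ne hg hB.ne_empty.symm
  simpa [corr_empty, ← Finset.mul_sum] using h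

lemma corr_eq_zero_of_expansion_const (hg : ∀ j, ∑ t, g j t = 0) {c : Finset ι → α} {a : α}
    (hconst : ∀ τ, ∑ A, c A * corr g A τ = a) {B : Finset ι} (hB : B.Nonempty) (hc : c B ≠ 0)
    (τ : ι → G) : corr g B τ = 0 := by
  classical
  have h := sum_expansion_mul_corr hg c B
  simp only [hconst, ← Finset.mul_sum, sum_corr_eq_zero hg hB, mul_zero] at h
  have hsq := (mul_eq_zero.1 h.symm).resolve_left hc
  rw [Finset.sum_eq_zero_iff_of_nonneg fun _ _ ↦ mul_self_nonneg _] at hsq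
  exact mul_self_eq_zero.1 (hsq τ (Finset.mem_univ τ))

lemma coeff_empty_ne_zero_of_expansion_pos (hg : ∀ j, ∑ t, g j t = 0) {c : Finset ι → α}
    (hpos : ∀ τ, 0 < ∑ A, c A * corr g A τ) : c ∅ ≠ 0 := by
  classical
  intro hc
  have h := sum_expansion_mul_corr hg c ∅
  simp only [hc, zero_mul, corr_empty, ← Finset.sum_mul] at h
  have hsum : 0 < ∑ τ : ι → G, ∑ A, c A * corr g A τ :=
    Finset.sum_pos (fun τ _ ↦ hpos τ) Finset.univ_nonempty
  have hcard : (0 : α) < Fintype.card G := by exact_mod_cast Fintype.card_pos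
  exact (mul_pos hsum hcard).ne' h

end Corr

lemma prod_dvd_of_prod_dvd_mul_prod {ι : Type*} {S : Finset ι} {n d : ι → ℕ} {L : ℕ}
    (hcop : ∀ i ∈ S, Nat.Coprime (n i) (d i))
    (h : ∀ B ⊆ S, ∏ i ∈ B, d i ∣ L * ∏ i ∈ B, n i) : ∏ i ∈ S, d i ∣ L := by
  classical
  rw [Nat.dvd_iff_prime_pow_dvd_dvd]
  intro p k hp hk
  set B := S.filter (p ∣ d ·) with hB
  have hBS : B ⊆ S := Finset.filter_subset _ _
  have hcop_d : Nat.Coprime (p ^ k) (∏ i ∈ S \ B, d i) := by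
    refine (Nat.Coprime.prod_right fun i hi ↦ ?_).pow_left k
    rw [hp.coprime_iff_not_dvd]
    grind
  have hcop_n : Nat.Coprime (p ^ k) (∏ i ∈ B, n i) := by
    refine (Nat.Coprime.prod_right fun i hi ↦ ?_).pow_left k
    obtain ⟨hiS, hpi⟩ := Finset.mem_filter.1 hi
    exact ((hcop i hiS).coprime_dvd_right hpi).symm
  rw [← Finset.prod_sdiff hBS] at hk
  exact hcop_n.dvd_of_dvd_mul_right ((hcop_d.dvd_of_dvd_mul_left hk).trans (h B hBS))

section ProtocolSequences

variable {K L γ : ℕ} [NeZero L] {s : Fin K → ZMod L → ℕ}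

lemma sum_sub_duty (s : ZMod L → ℕ) : ∑ t, ((s t : ℝ) - (duty s : ℝ)) = 0 := by
  have hL : (L : ℝ) ≠ 0 := by exact_mod_cast NeZero.ne L
  simp [duty, Finset.sum_sub_distrib, ZMod.card, mul_div_cancel₀ _ hL]

lemma IsTI.Rcount_eq (hTI : IsTI s γ) (i : Fin K) (τ τ' : Fin K → ZMod L) :
    Rcount s γ i τ = Rcount s γ i τ' := by
  have hL : (L : ℚ) ≠ 0 := by exact_mod_cast NeZero.ne L
  have h := hTI i τ τ'
  rw [R, R, div_left_inj' hL] at h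
  exact_mod_cast h

lemma Rcount_pos_of_R_pos {i : Fin K} {τ : Fin K → ZMod L} (h : 0 < R s γ i τ) :
    0 < Rcount s γ i τ := by
  rw [R, div_pos_iff_of_pos_right (by exact_mod_cast NeZero.pos L)] at h
  exact_mod_cast h

lemma Rcount_eq_sum_throughputCoeff_mul_corr (hbin : ∀ i t, s i t = 0 ∨ s i t = 1)
    (f : Fin K → ℝ) (i : Fin K) (τ : Fin K → ZMod L) :
    (Rcount s γ i τ : ℝ) =
      ∑ B, throughputCoeff f (γ - 1) i B * corr (fun j t ↦ (s j t : ℝ) - f j) B τ := by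
  simp only [corr, Finset.mul_sum]
  rw [Finset.sum_comm, Rcount, Finset.card_filter, Nat.cast_sum]
  refine Finset.sum_congr rfl fun t _ ↦ ?_
  rw [sum_throughputCoeff_mul_prod]
  simp only [sub_add_cancel]
  rw [partialCoeffSum_prod_bernoulliGen_natCast fun j _ ↦ hbin j (t + τ j)]
  rcases hbin i (t + τ i) with h | h <;> simp [h]

lemma IsTI.corr_sub_duty_eq_zero (hTI : IsTI s γ) (hbin : ∀ i t, s i t = 0 ∨ s i t = 1)
    (hγ1 : 1 ≤ γ) (hγK : γ < K) (hR : ∀ i τ, 0 < R s γ i τ) {B : Finset (Fin K)} (hB : B.Nonempty)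
    (τ : Fin K → ZMod L) : corr (fun j t ↦ (s j t : ℝ) - (duty (s j) : ℝ)) B τ = 0 := by
  set f : Fin K → ℝ := fun j ↦ duty (s j)
  have hcentred (j : Fin K) : ∑ t, ((s j t : ℝ) - f j) = 0 := sum_sub_duty (s j)
  have hexpand (i τ) := Rcount_eq_sum_throughputCoeff_mul_corr (γ := γ) hbin f i τ
  have hempty (i : Fin K) : throughputCoeff f (γ - 1) i ∅ ≠ 0 :=
    coeff_empty_ne_zero_of_expansion_pos hcentred fun τ ↦ by
      rw [← hexpand i τ]
      exact_mod_cast Rcount_pos_of_R_pos (hR i τ)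
  obtain ⟨i, hi⟩ := exists_throughputCoeff_ne_zero (by rw [Fintype.card_fin]; omega) hempty hB
  refine corr_eq_zero_of_expansion_const hcentred (a := Rcount s γ i τ) (fun τ' ↦ ?_) hB hi τ
  rw [← hexpand i τ', hTI.Rcount_eq i τ' τ]

lemma IsTI.Hcorr_eq_mul_prod_duty (hTI : IsTI s γ) (hbin : ∀ i t, s i t = 0 ∨ s i t = 1)
    (hγ1 : 1 ≤ γ) (hγK : γ < K) (hR : ∀ i τ, 0 < R s γ i τ) (A : Finset (Fin K))
    (τ : Fin K → ZMod L) : (Hcorr s A τ : ℚ) = L * ∏ j ∈ A, duty (s j) := by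
  have h := corr_add_const (A := A) (τ := τ)
    (fun B _ hB ↦ hTI.corr_sub_duty_eq_zero hbin hγ1 hγK hR hB τ) fun j ↦ (duty (s j) : ℝ)
  simp only [corr, sub_add_cancel, ZMod.card] at h
  rw [Hcorr]
  exact_mod_cast h

end ProtocolSequences

theorem stmt4 (K L γ : ℕ) (hK : 2 ≤ K) (hL : 1 ≤ L) [NeZero L]
    (s : Fin K → ZMod L → ℕ) (hbin : ∀ i t, s i t = 0 ∨ s i t = 1)
    (hγ1 : 1 ≤ γ) (hγK : γ < K) (hTI : IsTI s γ)
    (hR : ∀ (i : Fin K) (τ : Fin K → ZMod L), 0 < R s γ i τ)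
    (n d : Fin K → ℕ) (hn : ∀ i, 0 < n i) (hd : ∀ i, 0 < d i)
    (hcop : ∀ i, Nat.Coprime (n i) (d i))
    (hduty : ∀ i, duty (s i) = (n i : ℚ) / (d i)) :
    (∏ i, d i) ∣ L := by
  refine prod_dvd_of_prod_dvd_mul_prod (fun i _ ↦ hcop i) fun A _ ↦ Dvd.intro_left (Hcorr s A 0) ?_
  have hcorr := hTI.Hcorr_eq_mul_prod_duty hbin hγ1 hγK hR A 0
  have hd0 : ∏ j ∈ A, (d j : ℚ) ≠ 0 := Finset.prod_ne_zero_iff.2 fun j _ ↦ by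
    exact_mod_cast (hd j).ne'
  simp only [hduty, Finset.prod_div_distrib] at hcorr
  field_simp at hcorr
  exact_mod_cast hcorr
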